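/- Let t_1, …, t_j ∈ ℝ^n be orthonormal vectors, let Π = ∏_{i=1}^j (I_n − 2 t_i t_i^T), and let Π̃ be an n×n orthogonal matrix with operator norm error ‖Π̃ − Π‖ ≤ δ. Let A ∈ ℝ^{m×n} with rows A_1, …, A_m, set Σ = Σ_{k=1}^m ‖A_k − Σ_{i=1}^j ⟨t_i, A_k⟩ t_i‖², and assume Σ_{k=1}^m ‖((Π̃ + I_n)/2) A_k‖² > 0 and Σ + ‖A‖_F² · δ/2 > 0. Then for every row index s: ‖((Π̃ + I_n)/2) A_s‖² / Σ_{k=1}^m ‖((Π̃ + I_n)/2) A_k‖² ≥ (‖A_s − Σ_{i=1}^j ⟨t_i, A_s⟩ t_i‖² − ‖A_s‖² · δ/2) / (Σ + ‖A‖_F² · δ/2). -/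

import Mathlib

/-!
Write `H = (M + I) / 2`. If `M` is an isometry, then expanding the square gives
`‖H x‖² = (‖x‖² + ⟪x, M x⟫) / 2` (`norm_sq_half_add`). The product of the commuting reflections
`I - 2 tᵢ tᵢᵀ` acts as `x ↦ x - 2 ∑ᵢ ⟪tᵢ, x⟫ tᵢ` (`reflection_prod_apply`), so by Bessel's identity
the squared norm of the residual `x - ∑ᵢ ⟪tᵢ, x⟫ tᵢ` is again `(‖x‖² + ⟪x, Π x⟫) / 2`
(`norm_sq_residual`). The two quantities therefore differ by `⟪x, (Π̃ - Π) x⟫ / 2`, which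
Cauchy–Schwarz bounds in absolute value by `‖x‖² δ / 2` (`abs_half_add_sub_residual_le`). Using the
lower bound in the numerator and the sum of the upper bounds in the denominator gives the claim.
-/

open scoped BigOperators
open Matrix RealInnerProductSpace

noncomputable section

/-- The `k`-th row of a matrix, regarded as a vector of the Euclidean space `ℝ^n`. -/
noncomputable def matRow {m n : ℕ} (A : Matrix (Fin m) (Fin n) ℝ) (k : Fin m) :
    EuclideanSpace ℝ (Fin n) :=
  (WithLp.equiv 2 (Fin n → ℝ)).symm (A k)

lemma reflection_apply {n : ℕ} (u x : EuclideanSpace ℝ (Fin n)) :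
    Matrix.toEuclideanCLM (𝕜 := ℝ)
      ((1 : Matrix (Fin n) (Fin n) ℝ) - (2 : ℝ) • Matrix.vecMulVec u u) x
      = x - (2 * ⟪u, x⟫) • u := by
  ext i
  simp [Matrix.vecMulVec_mulVec, PiLp.inner_apply,
    dotProduct, mul_comm, mul_left_comm]

/-- A product of reflections in orthonormal directions negates each of those directions: by
orthogonality a later reflection does not see the components removed by the others. -/
lemma reflection_prod_apply {n : ℕ} : ∀ {j : ℕ} (t : Fin j → EuclideanSpace ℝ (Fin n)),
    Orthonormal ℝ t → ∀ x : EuclideanSpace ℝ (Fin n),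
    Matrix.toEuclideanCLM (𝕜 := ℝ) (List.ofFn fun i =>
      (1 : Matrix (Fin n) (Fin n) ℝ) - (2 : ℝ) • Matrix.vecMulVec (t i) (t i)).prod x
      = x - (2 : ℝ) • ∑ i, ⟪t i, x⟫ • t i := by
  intro j
  induction j with
  | zero => intro t _ x; simp
  | succ j ih =>
    intro t ht x
    have ht' : Orthonormal ℝ fun i : Fin j => t i.succ :=
      ht.comp _ (Fin.succ_injective j)
    have h0 : ∀ i : Fin j, ⟪t 0, t i.succ⟫ = 0 := fun i =>
      ht.2 (Fin.succ_ne_zero i).symm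
    rw [List.ofFn_succ, List.prod_cons, map_mul, ContinuousLinearMap.mul_apply,
      ih (fun i => t i.succ) ht' x, reflection_apply, Fin.sum_univ_succ]
    have h1 : ⟪t 0, x - (2 : ℝ) • ∑ i : Fin j, ⟪t i.succ, x⟫ • t i.succ⟫ = ⟪t 0, x⟫ := by
      simp [inner_sub_right, inner_smul_right, inner_sum, h0]
    rw [h1]
    module

lemma norm_sq_residual {n j : ℕ} (t : Fin j → EuclideanSpace ℝ (Fin n))
    (ht : Orthonormal ℝ t) (x : EuclideanSpace ℝ (Fin n)) :
    ‖x - ∑ i, ⟪t i, x⟫ • t i‖ ^ 2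
      = (‖x‖ ^ 2 + ⟪x, x - (2 : ℝ) • ∑ i, ⟪t i, x⟫ • t i⟫) / 2 := by
  -- The projection `p` satisfies `⟪p, p⟫ = ⟪x, p⟫`.
  have h : ⟪∑ i, ⟪t i, x⟫ • t i, ∑ i, ⟪t i, x⟫ • t i⟫ = ⟪x, ∑ i, ⟪t i, x⟫ • t i⟫ := by
    rw [ht.inner_sum, inner_sum]
    refine Finset.sum_congr rfl fun i _ => ?_
    simp [inner_smul_right, real_inner_comm]
  rw [norm_sub_sq_real, ← real_inner_self_eq_norm_sq (∑ i, ⟪t i, x⟫ • t i), h,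
    inner_sub_right, inner_smul_right, real_inner_self_eq_norm_sq]
  ring

lemma norm_orthogonal_apply {n : ℕ} (Q : Matrix (Fin n) (Fin n) ℝ) (hQ : Qᵀ * Q = 1)
    (x : EuclideanSpace ℝ (Fin n)) :
    ‖Matrix.toEuclideanCLM (𝕜 := ℝ) Q x‖ ^ 2 = ‖x‖ ^ 2 := by
  have h : (Q *ᵥ x.ofLp) ⬝ᵥ (Q *ᵥ x.ofLp) = x.ofLp ⬝ᵥ x.ofLp := by
    rw [Matrix.dotProduct_mulVec, Matrix.vecMul_mulVec, hQ, Matrix.vecMul_one]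
  rw [EuclideanSpace.real_norm_sq_eq, EuclideanSpace.real_norm_sq_eq]
  simpa [dotProduct, sq] using h

lemma norm_sq_half_add {n : ℕ} (Q : Matrix (Fin n) (Fin n) ℝ) (hQ : Qᵀ * Q = 1)
    (x : EuclideanSpace ℝ (Fin n)) :
    ‖(WithLp.equiv 2 (Fin n → ℝ)).symm (((2⁻¹ : ℝ) • (Q + 1)).mulVec x.ofLp)‖ ^ 2
      = (‖x‖ ^ 2 + ⟪x, Matrix.toEuclideanCLM (𝕜 := ℝ) Q x⟫) / 2 := by
  have h : (WithLp.equiv 2 (Fin n → ℝ)).symm (((2⁻¹ : ℝ) • (Q + 1)).mulVec x.ofLp)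
      = (2⁻¹ : ℝ) • (x + Matrix.toEuclideanCLM (𝕜 := ℝ) Q x) := by
    ext i
    simp [Matrix.smul_mulVec, Matrix.add_mulVec, add_comm]
  rw [h, norm_smul, mul_pow, norm_add_sq_real, norm_orthogonal_apply Q hQ, Real.norm_eq_abs,
    sq_abs]
  ring

/-- The squared lengths produced by the exact and by the perturbed operator differ by
`⟪x, (Π̃ - Π) x⟫ / 2`, hence by at most `‖x‖² δ / 2`. -/
lemma abs_half_add_sub_residual_le {n j : ℕ}
    (t : Fin j → EuclideanSpace ℝ (Fin n)) (ht : Orthonormal ℝ t)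
    (P Pt : Matrix (Fin n) (Fin n) ℝ)
    (hP : P = (List.ofFn fun i =>
      (1 : Matrix (Fin n) (Fin n) ℝ) - (2 : ℝ) • Matrix.vecMulVec (t i) (t i)).prod)
    (hOrth : Ptᵀ * Pt = 1)
    (δ : ℝ) (hδ : ‖Matrix.toEuclideanCLM (𝕜 := ℝ) (Pt - P)‖ ≤ δ)
    (x : EuclideanSpace ℝ (Fin n)) :
    |‖(WithLp.equiv 2 (Fin n → ℝ)).symm (((2⁻¹ : ℝ) • (Pt + 1)).mulVec x.ofLp)‖ ^ 2
      - ‖x - ∑ i, ⟪t i, x⟫ • t i‖ ^ 2| ≤ ‖x‖ ^ 2 * δ / 2 := by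
  have hb : |⟪x, Matrix.toEuclideanCLM (𝕜 := ℝ) (Pt - P) x⟫| ≤ ‖x‖ ^ 2 * δ :=
    calc _ ≤ ‖x‖ * ‖Matrix.toEuclideanCLM (𝕜 := ℝ) (Pt - P) x‖ := abs_real_inner_le_norm _ _
      _ ≤ ‖x‖ * (δ * ‖x‖) := by
        gcongr
        exact ContinuousLinearMap.le_of_opNorm_le _ hδ x
      _ = ‖x‖ ^ 2 * δ := by ring
  rw [map_sub, _root_.sub_apply, inner_sub_right] at hb
  rw [norm_sq_half_add Pt hOrth, norm_sq_residual t ht, ← reflection_prod_apply t ht x, ← hP]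
  rw [abs_le] at hb ⊢
  constructor <;> linarith [hb.1, hb.2]

/-- lower bound on the perturbed adaptive-sampling probability.
If `Πt` is an orthogonal matrix within operator-norm distance `δ` of
`Π = ∏ᵢ (I − 2 tᵢtᵢᵀ)` for orthonormal `t_1, …, t_j`, then for every row index
`s`, the ratio `‖((Πt + I)/2) A_s‖² / Σ_k ‖((Πt + I)/2) A_k‖²` is at least
`(‖A_s − Σᵢ⟨tᵢ, A_s⟩tᵢ‖² − ‖A_s‖² δ/2) / (Σ + ‖A‖_F² δ/2)`. -/
theorem perturbed_sampling_probability_ge {m n j : ℕ}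
    (t : Fin j → EuclideanSpace ℝ (Fin n)) (ht : Orthonormal ℝ t)
    (P Pt : Matrix (Fin n) (Fin n) ℝ)
    (hP : P = (List.ofFn fun i =>
      (1 : Matrix (Fin n) (Fin n) ℝ) - (2 : ℝ) • Matrix.vecMulVec (t i) (t i)).prod)
    (hOrth : Ptᵀ * Pt = 1)
    (δ : ℝ) (hδ : ‖Matrix.toEuclideanCLM (𝕜 := ℝ) (Pt - P)‖ ≤ δ)
    (A : Matrix (Fin m) (Fin n) ℝ)
    (hpos : 0 < ∑ k : Fin m,
        ‖(WithLp.equiv 2 (Fin n → ℝ)).symm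
          (((2⁻¹ : ℝ) • (Pt + 1)).mulVec (A k))‖ ^ 2)
    (hpos' : 0 < (∑ k : Fin m, ‖matRow A k - ∑ i, ⟪t i, matRow A k⟫ • t i‖ ^ 2) +
        (∑ a, ∑ b, A a b ^ 2) * δ / 2)
    (s : Fin m) :
    (‖matRow A s - ∑ i, ⟪t i, matRow A s⟫ • t i‖ ^ 2 - ‖matRow A s‖ ^ 2 * δ / 2) /
        ((∑ k : Fin m, ‖matRow A k - ∑ i, ⟪t i, matRow A k⟫ • t i‖ ^ 2) +
          (∑ a, ∑ b, A a b ^ 2) * δ / 2)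
      ≤ ‖(WithLp.equiv 2 (Fin n → ℝ)).symm
            (((2⁻¹ : ℝ) • (Pt + 1)).mulVec (A s))‖ ^ 2 /
          ∑ k : Fin m,
            ‖(WithLp.equiv 2 (Fin n → ℝ)).symm
              (((2⁻¹ : ℝ) • (Pt + 1)).mulVec (A k))‖ ^ 2 := by
  have key := fun k => abs_le.mp
    (abs_half_add_sub_residual_le t ht P Pt hP hOrth δ hδ (matRow A k))
  have hF : ∑ k, ‖matRow A k‖ ^ 2 = ∑ a, ∑ b, A a b ^ 2 := by
    simp [EuclideanSpace.real_norm_sq_eq, matRow]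
  have hden : (∑ k : Fin m,
        ‖(WithLp.equiv 2 (Fin n → ℝ)).symm (((2⁻¹ : ℝ) • (Pt + 1)).mulVec (A k))‖ ^ 2)
      ≤ (∑ k : Fin m, ‖matRow A k - ∑ i, ⟪t i, matRow A k⟫ • t i‖ ^ 2) +
        (∑ a, ∑ b, A a b ^ 2) * δ / 2 := by
    rw [← hF, Finset.sum_mul, Finset.sum_div, ← Finset.sum_add_distrib]
    exact Finset.sum_le_sum fun k _ => sub_le_iff_le_add'.mp (key k).2
  have hnum : ‖matRow A s - ∑ i, ⟪t i, matRow A s⟫ • t i‖ ^ 2 - ‖matRow A s‖ ^ 2 * δ / 2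
      ≤ ‖(WithLp.equiv 2 (Fin n → ℝ)).symm (((2⁻¹ : ℝ) • (Pt + 1)).mulVec (A s))‖ ^ 2 := by
    have h := (key s).1
    change _ ≤ ‖(WithLp.equiv 2 (Fin n → ℝ)).symm
      (((2⁻¹ : ℝ) • (Pt + 1)).mulVec (matRow A s).ofLp)‖ ^ 2
    linarith
  exact div_le_div₀ (sq_nonneg _) hnum hpos hden
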